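/- arXiv:1203.5859 — 2 statements merged into one kernel-verified Lean document; each statement's English description precedes it below -/
import Mathlib

section
/- (Hamburger) For a real sequence (s_k)_{k≥0}, there exists a (nonnegative Borel) measure σ on ℝ with infinite support such that ∫_ℝ |u|^k dσ(u) < ∞ and s_k = ∫_ℝ u^k dσ(u) for all k ≥ 0, if and only if (s_k) is strictly positive, i.e., for every m ∈ ℕ and every nonzero vector (x_0,…,x_m) ∈ ℝ^{m+1}, ∑_{i,j=0}^m x_i x_j s_{i+j} > 0. -/
open MeasureTheory

/-- A real sequence `s` is strictly positive if all its Hankel quadratic forms are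
positive definite: they are strictly positive at every nonzero vector `(x 0, …, x m)`. -/
def IsStrictPosSeq (s : ℕ → ℝ) : Prop :=
  ∀ (m : ℕ) (x : ℕ → ℝ), (∃ i ≤ m, x i ≠ 0) →
    0 < ∑ i ∈ Finset.range (m + 1), ∑ j ∈ Finset.range (m + 1), x i * x j * s (i + j)

open Polynomial Filter Topology CompactlySupported

/-- The moment functional on polynomials. -/
noncomputable def momL (s : ℕ → ℝ) : ℝ[X] →ₗ[ℝ] ℝ :=
  Polynomial.lsum (fun i => s i • LinearMap.id)

lemma momL_C_mul_X_pow (s : ℕ → ℝ) (a : ℝ) (k : ℕ) : momL s (C a * X ^ k) = a * s k := by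
  rw [C_mul_X_pow_eq_monomial]
  simp only [momL, Polynomial.lsum_apply]
  rw [Polynomial.sum_monomial_index] <;> simp [mul_comm]

lemma momL_X_pow (s : ℕ → ℝ) (k : ℕ) : momL s (X ^ k) = s k := by
  simpa using momL_C_mul_X_pow s 1 k

lemma momL_sq (s : ℕ → ℝ) (m : ℕ) (x : ℕ → ℝ) :
    momL s ((∑ i ∈ Finset.range (m + 1), C (x i) * X ^ i) *
      (∑ i ∈ Finset.range (m + 1), C (x i) * X ^ i)) =
    ∑ i ∈ Finset.range (m + 1), ∑ j ∈ Finset.range (m + 1), x i * x j * s (i + j) := by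
  rw [Finset.sum_mul_sum, map_sum]
  refine Finset.sum_congr rfl fun i _ => ?_
  rw [map_sum]
  refine Finset.sum_congr rfl fun j _ => ?_
  rw [← momL_C_mul_X_pow, C_mul, pow_add]
  congr 1
  ring

lemma momL_sq_pos {s : ℕ → ℝ} (hs : IsStrictPosSeq s) (p : ℝ[X]) (hp : p ≠ 0) :
    0 < momL s (p * p) := by
  have h := hs p.natDegree p.coeff ⟨p.natDegree, le_rfl, by simpa using hp⟩
  rw [← momL_sq, ← Polynomial.as_sum_range_C_mul_X_pow] at h
  exact h

lemma momL_nonneg_of_isSumSq {s : ℕ → ℝ} (hs : IsStrictPosSeq s) {p : ℝ[X]} (hp : IsSumSq p) :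
    0 ≤ momL s p := by
  induction hp with
  | zero => simp
  | sq_add a h ih =>
    rw [map_add]
    by_cases ha : a = 0
    · simpa [ha] using ih
    · exact add_nonneg (momL_sq_pos hs a ha).le ih

lemma nonneg_of_ne (f : ℝ[X]) (a : ℝ) (h : ∀ x, x ≠ a → 0 ≤ f.eval x) : ∀ x, 0 ≤ f.eval x := by
  have hc : IsClosed {x : ℝ | 0 ≤ f.eval x} := isClosed_le continuous_const f.continuous
  have hd : Dense ({a}ᶜ : Set ℝ) := dense_compl_singleton a
  intro x
  exact (hc.closure_subset_iff.2 (fun y hy => h y hy)) (hd x)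

lemma isSumSq_of_nonneg (n : ℕ) : ∀ p : ℝ[X], p.natDegree ≤ n → (∀ x, 0 ≤ p.eval x) →
    IsSumSq p := by
  induction n with
  | zero =>
    intro p hd hp
    rw [Polynomial.eq_C_of_natDegree_le_zero hd] at hp ⊢
    have h0 : 0 ≤ p.coeff 0 := by simpa using hp 0
    rw [← Real.mul_self_sqrt h0, C_mul]
    exact IsSumSq.mul_self _
  | succ n ih =>
    intro p hd hp
    by_cases hdn : p.natDegree ≤ n
    · exact ih p hdn hp
    have hdeg : p.natDegree = n + 1 := by omega
    have hp0 : p ≠ 0 := by rintro rfl; simp at hdeg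
    obtain ⟨z, hz⟩ := IsAlgClosed.exists_aeval_eq_zero ℂ p (by
      rw [Polynomial.degree_eq_natDegree hp0, hdeg]; exact_mod_cast Nat.succ_ne_zero n)
    by_cases him : z.im = 0
    · -- real root
      have hr : p.IsRoot z.re := by
        have : z = algebraMap ℝ ℂ z.re := by
          apply Complex.ext <;> simp [him]
        rw [this, Polynomial.aeval_algebraMap_apply] at hz
        simpa using hz
      obtain ⟨q, hq⟩ := Polynomial.dvd_iff_isRoot.2 hr
      have hev : ∀ x, p.eval x = (x - z.re) * q.eval x := by intro x; rw [hq]; simp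
      have hq0 : q.IsRoot z.re := by
        have hc1 : Tendsto (fun x => q.eval x) (𝓝[>] z.re) (𝓝 (q.eval z.re)) :=
          q.continuous.continuousAt.tendsto.mono_left nhdsWithin_le_nhds
        have hc2 : Tendsto (fun x => q.eval x) (𝓝[<] z.re) (𝓝 (q.eval z.re)) :=
          q.continuous.continuousAt.tendsto.mono_left nhdsWithin_le_nhds
        have h1 : 0 ≤ q.eval z.re := by
          refine ge_of_tendsto hc1 ?_
          filter_upwards [self_mem_nhdsWithin] with x hx
          have hx' : 0 < x - z.re := sub_pos.2 hx
          have := hp x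
          rw [hev] at this
          exact nonneg_of_mul_nonneg_right this hx'
        have h2 : q.eval z.re ≤ 0 := by
          refine le_of_tendsto hc2 ?_
          filter_upwards [self_mem_nhdsWithin] with x hx
          have hx' : x - z.re < 0 := sub_neg.2 hx
          have := hp x
          rw [hev] at this
          by_contra! hh
          nlinarith
        exact le_antisymm h2 h1
      obtain ⟨r, hr'⟩ := Polynomial.dvd_iff_isRoot.2 hq0
      have hpr : p = ((X - C z.re) * (X - C z.re)) * r := by rw [hq, hr']; ring
      have hr0 : r ≠ 0 := by rintro rfl; simp [hpr] at hp0
      have hdr : r.natDegree ≤ n := by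
        have : p.natDegree = 2 + r.natDegree := by
          rw [hpr, Polynomial.natDegree_mul (mul_ne_zero (X_sub_C_ne_zero _) (X_sub_C_ne_zero _)) hr0,
            Polynomial.natDegree_mul (X_sub_C_ne_zero _) (X_sub_C_ne_zero _)]
          simp
        omega
      rw [hpr]
      refine (IsSumSq.mul_self _).mul (ih r hdr (nonneg_of_ne r z.re fun x hx => ?_))
      have := hp x
      rw [hpr, eval_mul] at this
      refine nonneg_of_mul_nonneg_right this ?_
      simp only [eval_mul, eval_sub, eval_X, eval_C]
      exact mul_self_pos.2 (sub_ne_zero.2 hx)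
    · obtain ⟨r, hr⟩ := p.quadratic_dvd_of_aeval_eq_zero_im_ne_zero hz him
      have hquad : (X ^ 2 - C (2 * z.re) * X + C (‖z‖ ^ 2) : ℝ[X]) =
          (X - C z.re) * (X - C z.re) + C z.im * C z.im := by
        rw [← Complex.normSq_eq_norm_sq, Complex.normSq_apply]
        simp only [C_mul, C_add, C_ofNat]
        ring
      rw [hquad] at hr
      have hr0 : r ≠ 0 := by rintro rfl; simp [hr] at hp0
      have hpos : ∀ x, 0 < ((X - C z.re) * (X - C z.re) + C z.im * C z.im : ℝ[X]).eval x := by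
        intro x
        simp only [eval_add, eval_mul, eval_sub, eval_X, eval_C]
        have := mul_self_pos.2 him
        nlinarith [mul_self_nonneg (x - z.re)]
      have hdr : r.natDegree ≤ n := by
        have h2 : ((X - C z.re) * (X - C z.re) + C z.im * C z.im : ℝ[X]).natDegree = 2 := by
          rw [← C_mul, natDegree_add_C, Polynomial.natDegree_mul (X_sub_C_ne_zero _) (X_sub_C_ne_zero _)]
          simp
        have hne : ((X - C z.re) * (X - C z.re) + C z.im * C z.im : ℝ[X]) ≠ 0 := by
          intro h; rw [h] at h2; simp at h2
        have : p.natDegree = 2 + r.natDegree := by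
          rw [hr, Polynomial.natDegree_mul hne hr0, h2]
        omega
      rw [hr]
      refine ((IsSumSq.mul_self _).add (IsSumSq.mul_self _)).mul (ih r hdr fun x => ?_)
      have := hp x
      rw [hr, eval_mul] at this
      exact nonneg_of_mul_nonneg_right this (hpos x)

/-- Functions dominated by a polynomial. -/
def polyBdd : Submodule ℝ (ℝ → ℝ) where
  carrier := {f | ∃ p : ℝ[X], ∀ x, |f x| ≤ p.eval x}
  zero_mem' := ⟨0, by simp⟩
  add_mem' := by
    rintro f g ⟨p, hp⟩ ⟨q, hq⟩
    refine ⟨p + q, fun x => ?_⟩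
    rw [eval_add]
    exact (abs_add_le _ _).trans (add_le_add (hp x) (hq x))
  smul_mem' := by
    rintro c f ⟨p, hp⟩
    refine ⟨C |c| * p, fun x => ?_⟩
    simp only [Pi.smul_apply, smul_eq_mul, abs_mul, eval_mul, eval_C]
    exact mul_le_mul_of_nonneg_left (hp x) (abs_nonneg c)

lemma polyBdd_poly (p : ℝ[X]) : (fun x => p.eval x) ∈ polyBdd := by
  refine ⟨1 + p * p, fun x => ?_⟩
  simp only [eval_add, eval_one, eval_mul]
  rw [abs_le]
  constructor <;> nlinarith [sq_nonneg (p.eval x - 1), sq_nonneg (p.eval x + 1)]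

/-- Polynomials as dominated functions. -/
def polyIn : ℝ[X] →ₗ[ℝ] polyBdd where
  toFun p := ⟨fun x => p.eval x, polyBdd_poly p⟩
  map_add' p q := by ext x; simp
  map_smul' c p := by ext x; simp

lemma polyIn_injective : Function.Injective polyIn := by
  intro p q h
  refine Polynomial.funext fun x => ?_
  exact congrFun (congrArg Subtype.val h) x

/-- The cone of nonnegative functions. -/
def posCone : PointedCone ℝ polyBdd where
  carrier := {f | ∀ x, 0 ≤ f.1 x}
  zero_mem' := fun _ => le_rfl
  add_mem' := fun hf hg x => add_nonneg (hf x) (hg x)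
  smul_mem' := fun c _ hf x => mul_nonneg c.2 (hf x)

lemma exists_ext {s : ℕ → ℝ} (hs : IsStrictPosSeq s) :
    ∃ g : polyBdd →ₗ[ℝ] ℝ, (∀ p, g (polyIn p) = momL s p) ∧
      ∀ f : polyBdd, (∀ x, 0 ≤ f.1 x) → 0 ≤ g f := by
  let e := LinearEquiv.ofInjective polyIn polyIn_injective
  let F : polyBdd →ₗ.[ℝ] ℝ := ⟨LinearMap.range polyIn, (momL s).comp e.symm.toLinearMap⟩
  have hF : ∀ p : ℝ[X], F ⟨polyIn p, ⟨p, rfl⟩⟩ = momL s p := by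
    intro p
    have : e.symm ⟨polyIn p, ⟨p, rfl⟩⟩ = p := by
      rw [LinearEquiv.symm_apply_eq]; rfl
    exact congrArg (momL s) this
  obtain ⟨g, hg1, hg2⟩ := riesz_extension posCone F (by
      rintro ⟨_, ⟨p, rfl⟩⟩ hx
      rw [hF]
      refine momL_nonneg_of_isSumSq hs (isSumSq_of_nonneg _ p le_rfl fun x => ?_)
      exact hx x) (by
      rintro ⟨f, p, hp⟩
      refine ⟨⟨polyIn p, ⟨p, rfl⟩⟩, ?_⟩
      intro x
      have := neg_le_of_abs_le (hp x)
      change 0 ≤ p.eval x + f x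
      linarith)
  refine ⟨g, fun p => ?_, fun f hf => hg2 f hf⟩
  rw [← hF]
  exact hg1 ⟨polyIn p, ⟨p, rfl⟩⟩

lemma cc_mem (f : C_c(ℝ, ℝ)) : (f : ℝ → ℝ) ∈ polyBdd := by
  obtain ⟨c, hc⟩ := f.hasCompactSupport.exists_bound_of_continuous f.continuous
  exact ⟨C c, fun x => by simpa using hc x⟩

/-- Compactly supported functions as dominated functions. -/
def ccIn : C_c(ℝ, ℝ) →ₗ[ℝ] polyBdd where
  toFun f := ⟨f, cc_mem f⟩
  map_add' _ _ := rfl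
  map_smul' _ _ := rfl

/-- cutoff -/
noncomputable def cutoff (n : ℕ) (x : ℝ) : ℝ := max 0 (min 1 (n + 1 - |x|))

lemma cutoff_nonneg (n : ℕ) (x : ℝ) : 0 ≤ cutoff n x := le_max_left _ _
lemma cutoff_le_one (n : ℕ) (x : ℝ) : cutoff n x ≤ 1 := max_le zero_le_one (min_le_left _ _)
lemma cutoff_eq_one {n : ℕ} {x : ℝ} (h : |x| ≤ n) : cutoff n x = 1 := by
  rw [cutoff, min_eq_left (by linarith), max_eq_right zero_le_one]
lemma cutoff_continuous (n : ℕ) : Continuous (cutoff n) := by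
  unfold cutoff; fun_prop
lemma cutoff_supp (n : ℕ) : HasCompactSupport (cutoff n) := by
  refine HasCompactSupport.intro (isCompact_Icc (a := -((n : ℝ) + 1)) (b := n + 1)) fun x hx => ?_
  have : (n : ℝ) + 1 < |x| := by
    by_contra! h
    exact hx (abs_le.1 h)
  rw [cutoff, max_eq_left]
  exact (min_le_right _ _).trans (by linarith)

/-- truncated power -/
noncomputable def truncPow (k n : ℕ) : C_c(ℝ, ℝ) where
  toFun x := x ^ k * cutoff n x
  continuous_toFun := (continuous_pow k).mul (cutoff_continuous n)
  hasCompactSupport' := (cutoff_supp n).mul_left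

lemma truncPow_apply (k n : ℕ) (x : ℝ) : truncPow k n x = x ^ k * cutoff n x := rfl

lemma exists_measure {s : ℕ → ℝ} (hs : IsStrictPosSeq s) :
    ∃ σ : Measure ℝ, (∀ k : ℕ, Integrable (fun u : ℝ => u ^ k) σ) ∧
        (∀ k : ℕ, ∫ u, u ^ k ∂σ = s k) := by
  obtain ⟨g, hg1, hg2⟩ := exists_ext hs
  have hmono : ∀ f h : polyBdd, (∀ x, f.1 x ≤ h.1 x) → g f ≤ g h := by
    intro f h hfh
    have := hg2 (h - f) (fun x => sub_nonneg.2 (hfh x))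
    rw [map_sub] at this
    linarith
  let Λ : C_c(ℝ, ℝ) →ₚ[ℝ] ℝ := PositiveLinearMap.mk₀ (g.comp ccIn) (fun f hf => hg2 _ hf)
  have hΛ : ∀ f, ∫ x, f x ∂(RealRMK.rieszMeasure Λ) = g (ccIn f) := fun f =>
    RealRMK.integral_rieszMeasure Λ f
  generalize hσ : RealRMK.rieszMeasure Λ = σ at hΛ
  have : IsFiniteMeasureOnCompacts σ := by rw [← hσ]; infer_instance
  have hccint : ∀ f : C_c(ℝ, ℝ), Integrable f σ := fun f =>
    f.continuous.integrable_of_hasCompactSupport f.hasCompactSupport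
  have heven : ∀ k : ℕ, Integrable (fun u : ℝ => u ^ (2 * k)) σ := by
    intro k
    have hcov : AECover σ atTop (fun n : ℕ => Set.Icc (-(n : ℝ)) n) :=
      aecover_Icc (tendsto_neg_atTop_atBot.comp tendsto_natCast_atTop_atTop)
        tendsto_natCast_atTop_atTop
    have hnn : ∀ x : ℝ, 0 ≤ x ^ (2 * k) := fun x => (even_two_mul k).pow_nonneg x
    refine hcov.integrable_of_integral_bounded_of_nonneg_ae (s (2 * k)) (fun n => ?_)
      (ae_of_all _ hnn) (Eventually.of_forall fun n => ?_)
    · exact (continuous_pow _).continuousOn.integrableOn_compact isCompact_Icc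
    · calc ∫ x in Set.Icc (-(n : ℝ)) n, x ^ (2 * k) ∂σ
          = ∫ x in Set.Icc (-(n : ℝ)) n, truncPow (2 * k) n x ∂σ := by
            refine setIntegral_congr_fun measurableSet_Icc fun x hx => ?_
            simp only [truncPow_apply, cutoff_eq_one (abs_le.2 hx), mul_one]
        _ ≤ ∫ x, truncPow (2 * k) n x ∂σ :=
            setIntegral_le_integral (hccint _)
              (ae_of_all _ fun x => mul_nonneg (hnn x) (cutoff_nonneg n x))
        _ = g (ccIn (truncPow (2 * k) n)) := hΛ _
        _ ≤ g (polyIn (X ^ (2 * k))) := by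
            refine hmono _ _ fun x => ?_
            change x ^ (2 * k) * cutoff n x ≤ eval x (X ^ (2 * k))
            rw [eval_pow, eval_X]
            exact mul_le_of_le_one_right (hnn x) (cutoff_le_one n x)
        _ = s (2 * k) := by rw [hg1, momL_X_pow]
  have hInt : ∀ k : ℕ, Integrable (fun u : ℝ => u ^ k) σ := by
    intro k
    refine ((heven 0).add (heven k)).mono' (continuous_pow k).aestronglyMeasurable
      (ae_of_all _ fun x => ?_)
    simp only [Pi.add_apply, mul_zero, pow_zero, Real.norm_eq_abs, mul_comm 2 k, pow_mul]
    rw [abs_le]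
    constructor <;> nlinarith [sq_nonneg (x ^ k - 1), sq_nonneg (x ^ k + 1)]
  refine ⟨σ, hInt, fun k => ?_⟩
  have h1 : Tendsto (fun n : ℕ => ∫ x, truncPow k n x ∂σ) atTop (𝓝 (∫ x, x ^ k ∂σ)) := by
    refine tendsto_integral_of_dominated_convergence (fun x => ‖x ^ k‖)
      (fun n => (truncPow k n).continuous.aestronglyMeasurable) (hInt k).norm
      (fun n => ae_of_all _ fun x => ?_) (ae_of_all _ fun x => ?_)
    · rw [truncPow_apply, norm_mul]
      refine mul_le_of_le_one_right (norm_nonneg _) ?_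
      rw [Real.norm_of_nonneg (cutoff_nonneg _ _)]
      exact cutoff_le_one _ _
    · refine tendsto_const_nhds.congr' ?_
      filter_upwards [eventually_ge_atTop ⌈|x|⌉₊] with n hn
      rw [truncPow_apply, cutoff_eq_one (Nat.ceil_le.1 hn), mul_one]
  have h2 : Tendsto (fun n : ℕ => ∫ x, truncPow k n x ∂σ) atTop (𝓝 (s k)) := by
    rw [tendsto_iff_norm_sub_tendsto_zero]
    refine squeeze_zero' (Eventually.of_forall fun n => norm_nonneg _) ?_
      (tendsto_const_div_atTop_nhds_zero_nat (s (2 * (k + 1))))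
    filter_upwards [eventually_ge_atTop 1] with n hn
    have hn' : (1 : ℝ) ≤ n := by exact_mod_cast hn
    have hn0 : (0 : ℝ) < n := by linarith
    have key : ∀ x : ℝ, |x ^ k * cutoff n x - x ^ k| ≤ (1 / n) * x ^ (2 * (k + 1)) := by
      intro x
      have hnn : 0 ≤ x ^ (2 * (k + 1)) := (even_two_mul _).pow_nonneg x
      by_cases hx : |x| ≤ n
      · rw [cutoff_eq_one hx, mul_one, sub_self, abs_zero]
        positivity
      · push Not at hx
        have e1 : |x ^ k * cutoff n x - x ^ k| = |x| ^ k * (1 - cutoff n x) := by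
          rw [← abs_pow, ← abs_of_nonneg (sub_nonneg.2 (cutoff_le_one n x)), ← abs_mul, abs_sub_comm]
          congr 1
          ring
        have e2 : x ^ (2 * (k + 1)) = |x| ^ k * |x| ^ (k + 1) * |x| := by
          rw [pow_mul, ← sq_abs, ← pow_mul]; ring
        have h1x : 1 ≤ |x| := hn'.trans hx.le
        rw [e1, e2, one_div, inv_mul_eq_div, le_div_iff₀ hn0]
        have a1 : |x| ^ k * (1 - cutoff n x) ≤ |x| ^ k * |x| ^ (k + 1) :=
          mul_le_mul_of_nonneg_left (by
            have := one_le_pow₀ h1x (n := k + 1)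
            linarith [cutoff_nonneg n x]) (by positivity)
        exact mul_le_mul a1 hx.le hn0.le (by positivity)
    have hval : g (polyIn (C (1 / (n : ℝ)) * X ^ (2 * (k + 1)))) = s (2 * (k + 1)) / n := by
      rw [hg1, momL_C_mul_X_pow]; ring
    have hk : g (polyIn (X ^ k)) = s k := by rw [hg1, momL_X_pow]
    rw [hΛ, ← hk, ← hval, ← map_sub, Real.norm_eq_abs, abs_le]
    constructor
    · rw [← map_neg]
      refine hmono _ _ fun x => ?_
      change -(eval x (C (1 / (n : ℝ)) * X ^ (2 * (k + 1)))) ≤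
        x ^ k * cutoff n x - eval x (X ^ k)
      simp only [eval_mul, eval_C, eval_pow, eval_X]
      exact neg_le_of_abs_le (key x)
    · refine hmono _ _ fun x => ?_
      change x ^ k * cutoff n x - eval x (X ^ k) ≤ (eval x (C (1 / (n : ℝ)) * X ^ (2 * (k + 1))))
      simp only [eval_mul, eval_C, eval_pow, eval_X]
      exact le_of_abs_le (key x)
  exact tendsto_nhds_unique h1 h2

lemma integral_poly {s : ℕ → ℝ} {σ : Measure ℝ}
    (h1 : ∀ k : ℕ, Integrable (fun u : ℝ => u ^ k) σ)
    (h2 : ∀ k : ℕ, ∫ u, u ^ k ∂σ = s k) (p : ℝ[X]) :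
    Integrable (fun x => p.eval x) σ ∧ ∫ x, p.eval x ∂σ = momL s p := by
  induction p using Polynomial.induction_on' with
  | add p q hp hq =>
    simp only [eval_add, map_add]
    exact ⟨hp.1.add hq.1, by rw [integral_add hp.1 hq.1, hp.2, hq.2]⟩
  | monomial n a =>
    rw [← C_mul_X_pow_eq_monomial, momL_C_mul_X_pow]
    simp only [eval_mul, eval_C, eval_pow, eval_X]
    exact ⟨(h1 n).const_mul a, by rw [integral_const_mul, h2]⟩

/-- **Hamburger's theorem.** A real sequence `s` is the moment sequence of a
nonnegative Borel measure on `ℝ` which is not supported on any finite set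
(i.e. has an infinite number of points of increase) if and only if `s` is
strictly positive. -/
theorem hamburger_moment_problem (s : ℕ → ℝ) :
    (∃ σ : Measure ℝ,
        (∀ S : Finset ℝ, σ (↑S : Set ℝ)ᶜ ≠ 0) ∧
        (∀ k : ℕ, Integrable (fun u : ℝ => |u| ^ k) σ) ∧
        (∀ k : ℕ, ∫ u, u ^ k ∂σ = s k)) ↔
      IsStrictPosSeq s := by
  constructor
  · rintro ⟨σ, hsupp, hInt, hmom⟩ m x ⟨i, him, hi⟩
    have hInt' : ∀ k : ℕ, Integrable (fun u : ℝ => u ^ k) σ := fun k =>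
      (hInt k).mono' (continuous_pow k).aestronglyMeasurable
        (ae_of_all _ fun u => by rw [Real.norm_eq_abs, abs_pow])
    rw [← momL_sq]
    set p : ℝ[X] := ∑ i ∈ Finset.range (m + 1), C (x i) * X ^ i with hp
    have hp0 : p ≠ 0 := by
      intro h
      apply hi
      have hc : p.coeff i = x i := by
        rw [hp, finsetSum_coeff]
        simp only [coeff_C_mul_X_pow]
        rw [Finset.sum_ite_eq, if_pos (Finset.mem_range.2 (by omega))]
      rw [← hc, h, coeff_zero]
    obtain ⟨h1, h2⟩ := integral_poly hInt' hmom (p * p)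
    rw [← h2]
    have hnn : ∀ u, 0 ≤ (p * p).eval u := fun u => by
      rw [eval_mul]; exact mul_self_nonneg _
    rw [integral_pos_iff_support_of_nonneg hnn h1]
    refine lt_of_lt_of_le (pos_iff_ne_zero.2 (hsupp p.roots.toFinset)) (measure_mono ?_)
    intro u hu
    simp only [Set.mem_compl_iff, Finset.mem_coe, Multiset.mem_toFinset, mem_roots hp0,
      IsRoot.def] at hu
    simp [Function.mem_support, eval_mul, hu]
  · intro hs
    obtain ⟨σ, hInt, hmom⟩ := exists_measure hs
    refine ⟨σ, fun S hS => ?_, fun k => ?_, hmom⟩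
    · let p : ℝ[X] := ∏ a ∈ S, (X - C a)
      have hp0 : p ≠ 0 := Finset.prod_ne_zero_iff.2 fun a _ => X_sub_C_ne_zero a
      have hpos := momL_sq_pos hs p hp0
      rw [← (integral_poly hInt hmom (p * p)).2] at hpos
      refine hpos.ne' (integral_eq_zero_of_ae ?_)
      have : ∀ᵐ u ∂σ, u ∈ (↑S : Set ℝ) := by
        rw [ae_iff]; exact hS
      filter_upwards [this] with u hu
      have : p.eval u = 0 := by
        rw [eval_prod]
        exact Finset.prod_eq_zero hu (by simp)
      simp [eval_mul, this]
    · simpa only [Real.norm_eq_abs, abs_pow] using (hInt k).norm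
end

section
/- (Carleman) Let (s_k)_{k≥0} be a strictly positive real sequence such that ∑_{n=1}^∞ s_{2n}^{-1/(2n)} = ∞. Then the Hamburger moment problem for (s_k) is determinate: if σ₁ and σ₂ are measures on ℝ with ∫_ℝ |u|^k dσ_i(u) < ∞ and ∫_ℝ u^k dσ₁(u) = s_k = ∫_ℝ u^k dσ₂(u) for all k ≥ 0, then σ₁ = σ₂. -/
open MeasureTheory

lemma carleman_exp_deriv (z : ℂ) (m : ℕ) (t : ℝ) :
    HasDerivAt (fun t : ℝ => ∑ j ∈ Finset.range (m + 1), ((t : ℂ) * z) ^ j / (j.factorial : ℂ))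
      (z * ∑ j ∈ Finset.range m, ((t : ℂ) * z) ^ j / (j.factorial : ℂ)) t := by
  induction m with
  | zero => simpa using hasDerivAt_const t (1 : ℂ)
  | succ m ih =>
    have h1 : HasDerivAt (fun t : ℝ => (t : ℂ) * z) z t := by
      simpa using (Complex.ofRealCLM.hasDerivAt (x := t)).mul_const z
    have h2 := (h1.pow (m + 1)).div_const (((m + 1).factorial : ℕ) : ℂ)
    have h3 := ih.add h2
    have e1 : (fun t : ℝ => ∑ j ∈ Finset.range (m + 1 + 1),
        ((t : ℂ) * z) ^ j / (j.factorial : ℂ)) =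
        (fun t : ℝ => ∑ j ∈ Finset.range (m + 1), ((t : ℂ) * z) ^ j / (j.factorial : ℂ)) +
        fun t : ℝ => ((t : ℂ) * z) ^ (m + 1) / (((m + 1).factorial : ℕ) : ℂ) := by
      funext t
      rw [Finset.sum_range_succ]; rfl
    rw [e1]
    refine h3.congr_deriv ?_
    rw [Finset.sum_range_succ, mul_add, Nat.factorial_succ]
    have : ((m.factorial : ℕ) : ℂ) ≠ 0 := by exact_mod_cast Nat.factorial_ne_zero m
    have h' : ((m : ℂ) + 1) ≠ 0 := by exact_mod_cast Nat.succ_ne_zero m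
    push_cast
    try simp only [Nat.add_sub_cancel]
    field_simp

lemma carleman_exp_taylor_aux (x : ℝ) (m : ℕ) : ∀ t ∈ Set.Icc (0 : ℝ) 1,
    ‖Complex.exp ((t : ℂ) * (Complex.I * x)) -
      ∑ j ∈ Finset.range m, ((t : ℂ) * (Complex.I * x)) ^ j / (j.factorial : ℂ)‖
      ≤ (t * |x|) ^ m / m.factorial := by
  induction m with
  | zero =>
    intro t _
    have : (t : ℂ) * (Complex.I * x) = Complex.I * ((t * x : ℝ) : ℂ) := by push_cast; ring
    simp only [Finset.range_zero, Finset.sum_empty, sub_zero, pow_zero, Nat.factorial_zero]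
    rw [this, Complex.norm_exp_I_mul_ofReal]; norm_num
  | succ m ih =>
    have hd : ∀ t : ℝ, HasDerivAt (fun t : ℝ => Complex.exp ((t : ℂ) * (Complex.I * x)) -
      ∑ j ∈ Finset.range (m + 1), ((t : ℂ) * (Complex.I * x)) ^ j / (j.factorial : ℂ))
      (Complex.I * x * (Complex.exp ((t : ℂ) * (Complex.I * x)) -
      ∑ j ∈ Finset.range m, ((t : ℂ) * (Complex.I * x)) ^ j / (j.factorial : ℂ))) t := by
      intro t
      have h1 : HasDerivAt (fun t : ℝ => (t : ℂ) * (Complex.I * x)) (Complex.I * x) t := by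
        simpa using (Complex.ofRealCLM.hasDerivAt (x := t)).mul_const (Complex.I * x)
      have h2 := h1.cexp.sub (carleman_exp_deriv (Complex.I * x) m t)
      refine h2.congr_deriv ?_
      ring
    have hB : ∀ t : ℝ, HasDerivAt (fun t : ℝ => (t * |x|) ^ (m + 1) / ((m + 1).factorial : ℝ))
        (|x| * ((t * |x|) ^ m / m.factorial)) t := by
      intro t
      have h1 : HasDerivAt (fun t : ℝ => t * |x|) |x| t := by
        simpa using (hasDerivAt_id t).mul_const |x|
      refine ((h1.pow (m + 1)).div_const _).congr_deriv ?_
      rw [Nat.factorial_succ]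
      have : ((m.factorial : ℕ) : ℝ) ≠ 0 := by exact_mod_cast Nat.factorial_ne_zero m
      have h' : ((m : ℝ) + 1) ≠ 0 := by exact_mod_cast Nat.succ_ne_zero m
      push_cast
      try simp only [Nat.add_sub_cancel]
      field_simp
    intro t ht
    refine image_norm_le_of_norm_deriv_right_le_deriv_boundary (a := 0) (b := 1)
      (fun t _ => (hd t).continuousAt.continuousWithinAt)
      (fun t _ => (hd t).hasDerivWithinAt) ?_ hB ?_ ht
    · simp [Finset.sum_range_succ']
    · intro t ht
      rw [norm_mul]
      have : ‖Complex.I * (x : ℂ)‖ = |x| := by simp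
      rw [this]
      exact mul_le_mul_of_nonneg_left (ih t ⟨ht.1, ht.2.le⟩) (abs_nonneg x)

lemma carleman_exp_taylor (x : ℝ) (m : ℕ) :
    ‖Complex.exp (Complex.I * x) -
      ∑ j ∈ Finset.range m, (Complex.I * x) ^ j / (j.factorial : ℂ)‖
      ≤ |x| ^ m / m.factorial := by
  simpa using carleman_exp_taylor_aux x m 1 (by simp)

/-- The iterated derivatives of the characteristic function. -/
noncomputable def carlemanF (σ : Measure ℝ) (n : ℕ) (t : ℝ) : ℂ :=
  ∫ u : ℝ, (Complex.I * u) ^ n * Complex.exp (Complex.I * ((t * u : ℝ) : ℂ)) ∂σ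

lemma carlemanF_integrable {σ : Measure ℝ} (hσ : ∀ k : ℕ, Integrable (fun u : ℝ => |u| ^ k) σ)
    (n : ℕ) (t : ℝ) : Integrable (fun u : ℝ =>
      (Complex.I * (u : ℂ)) ^ n * Complex.exp (Complex.I * ((t * u : ℝ) : ℂ))) σ := by
  refine (hσ n).mono' (Continuous.aestronglyMeasurable (by fun_prop)) ?_
  refine Filter.Eventually.of_forall fun u => ?_
  rw [norm_mul, Complex.norm_exp_I_mul_ofReal]
  simp

lemma carlemanF_taylor {σ : Measure ℝ} (hσ : ∀ k : ℕ, Integrable (fun u : ℝ => |u| ^ k) σ)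
    (n m : ℕ) (t h : ℝ) :
    ‖carlemanF σ n (t + h) - ∑ j ∈ Finset.range m,
      ((h : ℂ) ^ j / (j.factorial : ℂ)) * carlemanF σ (n + j) t‖
      ≤ |h| ^ m / m.factorial * ∫ u, |u| ^ (n + m) ∂σ := by
  unfold carlemanF
  simp_rw [← integral_const_mul]
  rw [← integral_finsetSum _ (fun j _ => (carlemanF_integrable hσ (n + j) t).const_mul _),
    ← integral_sub (carlemanF_integrable hσ n (t + h))
      (integrable_finsetSum _ (fun j _ => (carlemanF_integrable hσ (n + j) t).const_mul _))]
  refine norm_integral_le_of_norm_le ((hσ (n + m)).const_mul _) ?_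
  refine Filter.Eventually.of_forall fun u => ?_
  have key := carleman_exp_taylor (h * u) m
  have e : (Complex.I * (u : ℂ)) ^ n * Complex.exp (Complex.I * (((t + h) * u : ℝ) : ℂ)) -
      ∑ j ∈ Finset.range m, ((h : ℂ) ^ j / (j.factorial : ℂ)) *
        ((Complex.I * (u : ℂ)) ^ (n + j) * Complex.exp (Complex.I * ((t * u : ℝ) : ℂ))) =
      ((Complex.I * (u : ℂ)) ^ n * Complex.exp (Complex.I * ((t * u : ℝ) : ℂ))) *
      (Complex.exp (Complex.I * ((h * u : ℝ) : ℂ)) -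
      ∑ j ∈ Finset.range m, (Complex.I * ((h * u : ℝ) : ℂ)) ^ j / (j.factorial : ℂ)) := by
    rw [mul_sub, Finset.mul_sum, mul_assoc, ← Complex.exp_add]
    congr 1
    · congr 2; push_cast; ring
    · refine Finset.sum_congr rfl fun j _ => ?_
      push_cast; ring
  rw [e, norm_mul, norm_mul, Complex.norm_exp_I_mul_ofReal]
  have e2 : ‖(Complex.I * (u : ℂ)) ^ n‖ = |u| ^ n := by simp
  rw [e2, mul_one]
  calc |u| ^ n * _ ≤ |u| ^ n * (|h * u| ^ m / m.factorial) := by gcongr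
    _ = _ := by rw [abs_mul, pow_add]; ring

/-- Bang's argument for the Denjoy-Carleman theorem. -/
lemma carleman_bang (F : ℕ → ℝ → ℂ) (M : ℕ → ℝ) (hM : ∀ n, 0 < M n)
    (hlog : ∀ n, M (n + 1) ^ 2 ≤ M n * M (n + 2)) (h0 : ∀ n, F n 0 = 0)
    (hT : ∀ n m t h, ‖F n (t + h) - ∑ j ∈ Finset.range m,
      ((h : ℂ) ^ j / (j.factorial : ℂ)) * F (n + j) t‖ ≤ |h| ^ m / m.factorial * M (n + m))
    (hdiv : ¬ Summable fun n => M n / M (n + 1)) (t : ℝ) : F 0 t = 0 := by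
  have hmono : Monotone fun n => M (n + 1) / M n := by
    refine monotone_nat_of_le_succ fun n => ?_
    rw [div_le_div_iff₀ (hM _) (hM _)]
    nlinarith [hlog n]
  have hpw : ∀ k n j, n + j ≤ k + 1 → M (n + j) ≤ M n * (M (k + 1) / M k) ^ j := by
    intro k n j
    induction j with
    | zero => intro _; simp
    | succ j ih =>
      intro hj
      have h1 := ih (by omega)
      have h2 : M (n + j + 1) / M (n + j) ≤ M (k + 1) / M k := hmono (by omega : n + j ≤ k)
      have h3 : M (n + (j + 1)) = M (n + j) * (M (n + j + 1) / M (n + j)) := by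
        have := (hM (n + j)).ne'
        rw [← add_assoc]
        field_simp
      rw [h3, pow_succ, ← mul_assoc]
      have := hM n
      have := hM k
      have := hM (k + 1)
      exact mul_le_mul h1 h2 (div_pos (hM _) (hM _)).le (by positivity)
  have main : ∀ d k t, |t| ≤ ∑ i ∈ Finset.range d, M (k + i) / M (k + i + 1) / Real.exp 1 →
      ∀ n < k, ‖F n t‖ ≤ M n * Real.exp ((n : ℝ) - k) := by
    intro d
    induction d with
    | zero =>
      intro k t ht n _
      have : t = 0 := by simpa using ht
      rw [this, h0, norm_zero]
      exact mul_nonneg (hM n).le (Real.exp_pos _).le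
    | succ d ih =>
      intro k t ht n hn
      rw [Finset.sum_range_succ'] at ht
      set S := ∑ i ∈ Finset.range d, M (k + (i + 1)) / M (k + (i + 1) + 1) / Real.exp 1 with hS
      have hS0 : 0 ≤ S := Finset.sum_nonneg fun i _ =>
        (div_pos (div_pos (hM _) (hM _)) (Real.exp_pos _)).le
      simp only [add_zero] at ht
      set a := M k / M (k + 1) / Real.exp 1 with ha
      have ha0 : 0 < a := div_pos (div_pos (hM _) (hM _)) (Real.exp_pos _)
      have hSa : 0 < S + a := by linarith
      obtain ⟨t', h, hth, ht', hh⟩ : ∃ t' h, t = t' + h ∧ |t'| ≤ S ∧ |h| ≤ a := by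
        refine ⟨t * (S / (S + a)), t * (a / (S + a)), ?_, ?_, ?_⟩
        · field_simp
        · rw [abs_mul, abs_of_nonneg (div_nonneg hS0 hSa.le)]
          calc |t| * (S / (S + a)) ≤ (S + a) * (S / (S + a)) := by gcongr
            _ = S := by field_simp
        · rw [abs_mul, abs_of_nonneg (div_nonneg ha0.le hSa.le)]
          calc |t| * (a / (S + a)) ≤ (S + a) * (a / (S + a)) := by gcongr
            _ = a := by field_simp
      have ihk := ih (k + 1) t' (by
        refine ht'.trans (le_of_eq ?_)
        rw [hS]
        refine Finset.sum_congr rfl fun i _ => ?_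
        rw [show k + (i + 1) = k + 1 + i by ring])
      obtain ⟨m, hm⟩ : ∃ m, n + m = k + 1 := ⟨k + 1 - n, by omega⟩
      have hTm := hT n m t' h
      rw [← hth] at hTm
      have hb1 : ‖F n t‖ ≤ (∑ j ∈ Finset.range m, |h| ^ j / j.factorial * ‖F (n + j) t'‖) +
          |h| ^ m / m.factorial * M (n + m) := by
        have h1 := norm_sub_norm_le (F n t) (∑ j ∈ Finset.range m,
          ((h : ℂ) ^ j / (j.factorial : ℂ)) * F (n + j) t')
        have h2 := norm_sum_le (Finset.range m)
          (fun j => ((h : ℂ) ^ j / (j.factorial : ℂ)) * F (n + j) t')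
        have h3 : ∀ j, ‖((h : ℂ) ^ j / (j.factorial : ℂ)) * F (n + j) t'‖ =
            |h| ^ j / j.factorial * ‖F (n + j) t'‖ := by
          intro j; simp
        simp_rw [h3] at h2
        linarith
      set c := M n * Real.exp ((n : ℝ) - (k + 1)) with hc
      set r := M (k + 1) / M k with hr
      have hr0 : 0 < r := div_pos (hM _) (hM _)
      have hc0 : 0 < c := mul_pos (hM _) (Real.exp_pos _)
      have term : ∀ j, n + j ≤ k + 1 →
          |h| ^ j / j.factorial * (M (n + j) * Real.exp (((n + j : ℕ) : ℝ) - (k + 1))) ≤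
          c * ((Real.exp 1 * |h| * r) ^ j / j.factorial) := by
        intro j hj
        have e1 : Real.exp (((n + j : ℕ) : ℝ) - (k + 1)) =
            Real.exp ((n : ℝ) - (k + 1)) * Real.exp 1 ^ j := by
          rw [← Real.exp_nat_mul, ← Real.exp_add]; congr 1; push_cast; ring
        rw [e1]
        calc _ ≤ |h| ^ j / j.factorial * ((M n * r ^ j) *
              (Real.exp ((n : ℝ) - (k + 1)) * Real.exp 1 ^ j)) := by
              gcongr; exact hpw k n j hj
          _ = _ := by rw [hc]; ring
      have hb2 : ‖F n t‖ ≤ ∑ j ∈ Finset.range (m + 1),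
          c * ((Real.exp 1 * |h| * r) ^ j / j.factorial) := by
        refine hb1.trans ?_
        rw [Finset.sum_range_succ]
        refine add_le_add (Finset.sum_le_sum fun j hj => ?_) ?_
        · have hj' := Finset.mem_range.1 hj
          refine le_trans ?_ (term j (by omega))
          have := ihk (n + j) (by omega)
          push_cast at this ⊢
          gcongr
        · refine le_trans (le_of_eq ?_) (term m (by omega))
          rw [hm]; simp
      rw [← Finset.mul_sum] at hb2
      have hx0 : 0 ≤ Real.exp 1 * |h| * r := by positivity
      have hx1 : Real.exp 1 * |h| * r ≤ 1 := by
        calc Real.exp 1 * |h| * r ≤ Real.exp 1 * a * r := by gcongr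
          _ = 1 := by
            have := (hM k).ne'
            have := (hM (k + 1)).ne'
            rw [ha, hr]; field_simp
      calc ‖F n t‖ ≤ c * Real.exp (Real.exp 1 * |h| * r) :=
            hb2.trans (by gcongr; exact Real.sum_le_exp_of_nonneg hx0 _)
        _ ≤ c * Real.exp 1 := by gcongr
        _ = M n * Real.exp ((n : ℝ) - k) := by
          rw [hc, mul_assoc, ← Real.exp_add]; congr 2; ring
  have bd : ∀ k : ℕ, ‖F 0 t‖ ≤ M 0 * Real.exp (-((k + 1 : ℕ) : ℝ)) := by
    intro k
    have hdiv' : ¬ Summable fun i => M (k + 1 + i) / M (k + 1 + i + 1) / Real.exp 1 := by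
      intro hs
      apply hdiv
      have h1 := hs.mul_right (Real.exp 1)
      rw [← summable_nat_add_iff (k + 1)]
      refine h1.congr fun i => ?_
      rw [div_mul_cancel₀ _ (Real.exp_pos 1).ne', add_comm (k + 1) i]
    have htend := (not_summable_iff_tendsto_nat_atTop_of_nonneg (fun i =>
      (div_pos (div_pos (hM _) (hM _)) (Real.exp_pos _)).le)).1 hdiv'
    obtain ⟨d, hd⟩ := (htend.eventually_ge_atTop |t|).exists
    have := main d (k + 1) t hd 0 (by omega)
    simpa using this
  have lim : Filter.Tendsto (fun k : ℕ => M 0 * Real.exp (-((k + 1 : ℕ) : ℝ)))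
      Filter.atTop (nhds 0) := by
    have h1 : Filter.Tendsto (fun k : ℕ => Real.exp (-((k : ℕ) : ℝ))) Filter.atTop (nhds 0) :=
      Real.tendsto_exp_neg_atTop_nhds_zero.comp tendsto_natCast_atTop_atTop
    have h2 := (h1.comp (Filter.tendsto_add_atTop_nat 1)).const_mul (M 0)
    simpa using h2
  have := ge_of_tendsto' lim bd
  exact norm_le_zero_iff.1 this

/-- Carleman's inequality (with constant `2e`), as a summability statement. -/
lemma carleman_ineq (a : ℕ → ℝ) (ha : ∀ n, 0 < a n) (hs : Summable a) :
    Summable fun n : ℕ => (∏ j ∈ Finset.range (n + 1), a j) ^ ((n : ℝ) + 1)⁻¹ := by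
  set T : ℕ → ℝ := fun n => ∑ j ∈ Finset.range n, ((j : ℝ) + 1) * a j with hTdef
  have hT0 : ∀ n, 0 ≤ T n := fun n => Finset.sum_nonneg fun j _ => by
    have := ha j; positivity
  have hb : ∀ n : ℕ, (∏ j ∈ Finset.range (n + 1), a j) ^ ((n : ℝ) + 1)⁻¹ ≤
      Real.exp 1 * (T (n + 1) / ((n : ℝ) + 1) ^ 2) := by
    intro n
    have hn : (0 : ℝ) < (n : ℝ) + 1 := by positivity
    have amgm := Real.geom_mean_le_arith_mean (Finset.range (n + 1)) (fun _ => (1 : ℝ))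
      (fun j => ((j : ℝ) + 1) * a j) (fun _ _ => zero_le_one) (by simp; positivity)
      (fun j _ => by have := ha j; positivity)
    simp only [Real.rpow_one, one_mul, Finset.sum_const, Finset.card_range, nsmul_eq_mul,
      mul_one, Finset.prod_mul_distrib] at amgm
    push_cast at amgm
    have hfac : (∏ j ∈ Finset.range (n + 1), ((j : ℝ) + 1)) = ((n + 1).factorial : ℝ) := by
      rw [← Finset.prod_range_add_one_eq_factorial]; push_cast; rfl
    have hP : 0 ≤ ∏ j ∈ Finset.range (n + 1), a j := Finset.prod_nonneg fun j _ => (ha j).le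
    rw [hfac, Real.mul_rpow (by positivity) hP] at amgm
    have hst : ((n : ℝ) + 1) / Real.exp 1 ≤ (((n + 1).factorial : ℕ) : ℝ) ^ ((n : ℝ) + 1)⁻¹ := by
      have h1 := Real.pow_div_factorial_le_exp (x := (n : ℝ) + 1) hn.le (n + 1)
      have h2 : (((n : ℝ) + 1) / Real.exp 1) ^ (n + 1) ≤ ((n + 1).factorial : ℝ) := by
        have hf : (0 : ℝ) < ((n + 1).factorial : ℝ) := by positivity
        rw [div_pow, ← Real.exp_nat_mul, div_le_iff₀ (Real.exp_pos _)]
        rw [div_le_iff₀ hf] at h1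
        push_cast
        rw [mul_one]; linarith
      have h3 := Real.rpow_le_rpow (by positivity) h2 (inv_nonneg.2 hn.le)
      rwa [← Real.rpow_natCast, ← Real.rpow_mul (by positivity), Nat.cast_add, Nat.cast_one,
        mul_inv_cancel₀ hn.ne', Real.rpow_one] at h3
    set g := (∏ j ∈ Finset.range (n + 1), a j) ^ ((n : ℝ) + 1)⁻¹ with hg
    have hg0 : 0 ≤ g := Real.rpow_nonneg hP _
    have h4 : ((n : ℝ) + 1) / Real.exp 1 * g ≤ T (n + 1) / ((n : ℝ) + 1) :=
      (mul_le_mul_of_nonneg_right hst hg0).trans amgm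
    have he := Real.exp_pos 1
    calc g = (Real.exp 1 / ((n : ℝ) + 1)) * (((n : ℝ) + 1) / Real.exp 1 * g) := by
          field_simp
      _ ≤ (Real.exp 1 / ((n : ℝ) + 1)) * (T (n + 1) / ((n : ℝ) + 1)) := by gcongr
      _ = _ := by field_simp
  have hV : ∀ N : ℕ, ∑ n ∈ Finset.range N, T (n + 1) / ((n : ℝ) + 1) ^ 2 +
      T N / ((N : ℝ) + 1 / 2) ≤ 2 * ∑ j ∈ Finset.range N, a j := by
    intro N
    induction N with
    | zero => simp [hTdef]
    | succ N ih =>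
      rw [Finset.sum_range_succ, Finset.sum_range_succ]
      have hTs : T (N + 1) = T N + ((N : ℝ) + 1) * a N := by
        simp [hTdef, Finset.sum_range_succ]
      have hN : (0 : ℝ) ≤ N := Nat.cast_nonneg N
      have q : 1 / ((N : ℝ) + 1) ^ 2 + 1 / ((N : ℝ) + 1 + 1 / 2) ≤ 1 / ((N : ℝ) + 1 / 2) := by
        have : 1 / ((N : ℝ) + 1 / 2) - 1 / ((N : ℝ) + 1 + 1 / 2) =
            1 / (((N : ℝ) + 1 / 2) * ((N : ℝ) + 1 + 1 / 2)) := by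
          field_simp; ring
        have h2 : 1 / ((N : ℝ) + 1) ^ 2 ≤ 1 / (((N : ℝ) + 1 / 2) * ((N : ℝ) + 1 + 1 / 2)) := by
          apply one_div_le_one_div_of_le (by positivity)
          nlinarith
        linarith
      have q1 := mul_le_mul_of_nonneg_left q (hT0 (N + 1))
      have q2 : ((N : ℝ) + 1) * a N / ((N : ℝ) + 1 / 2) ≤ 2 * a N := by
        rw [div_le_iff₀ (by positivity)]
        nlinarith [ha N, mul_nonneg hN (ha N).le]
      have q3 : T (N + 1) * (1 / ((N : ℝ) + 1 / 2)) = T N / ((N : ℝ) + 1 / 2) +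
          ((N : ℝ) + 1) * a N / ((N : ℝ) + 1 / 2) := by rw [hTs]; ring
      have q4 : T (N + 1) * (1 / ((N : ℝ) + 1) ^ 2 + 1 / ((N : ℝ) + 1 + 1 / 2)) =
        T (N + 1) / ((N : ℝ) + 1) ^ 2 + T (N + 1) / ((N : ℝ) + 1 + 1 / 2) := by ring
      push_cast
      linarith
  have hsT : Summable fun n : ℕ => T (n + 1) / ((n : ℝ) + 1) ^ 2 := by
    refine summable_of_sum_range_le (c := 2 * ∑' j, a j)
      (fun n => div_nonneg (hT0 _) (by positivity)) fun N => ?_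
    have h1 := hV N
    have h2 : 0 ≤ T N / ((N : ℝ) + 1 / 2) := div_nonneg (hT0 _) (by positivity)
    have h3 := hs.sum_le_tsum (Finset.range N) (fun j _ => (ha j).le)
    linarith
  exact Summable.of_nonneg_of_le (fun n => Real.rpow_nonneg
    (Finset.prod_nonneg fun j _ => (ha j).le) _) hb (hsT.mul_left _)

lemma carleman_logconvex {σ : Measure ℝ} (hσ : ∀ k : ℕ, Integrable (fun u : ℝ => |u| ^ k) σ)
    (n : ℕ) : (∫ u, |u| ^ (n + 1) ∂σ) ^ 2 ≤ (∫ u, |u| ^ n ∂σ) * ∫ u, |u| ^ (n + 2) ∂σ := by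
  have h : ∀ x : ℝ, 0 ≤ (∫ u, |u| ^ n ∂σ) * (x * x) + (2 * ∫ u, |u| ^ (n + 1) ∂σ) * x +
      ∫ u, |u| ^ (n + 2) ∂σ := by
    intro x
    have e : (∫ u, |u| ^ n ∂σ) * (x * x) + (2 * ∫ u, |u| ^ (n + 1) ∂σ) * x +
      ∫ u, |u| ^ (n + 2) ∂σ =
      ∫ u, ((x * x) * |u| ^ n + (2 * x) * |u| ^ (n + 1) + |u| ^ (n + 2)) ∂σ := by
      have hi : Integrable (fun u : ℝ => (x * x) * |u| ^ n + (2 * x) * |u| ^ (n + 1)) σ :=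
        ((hσ n).const_mul _).add ((hσ (n + 1)).const_mul _)
      rw [integral_add hi (hσ (n + 2)),
        integral_add ((hσ n).const_mul _) ((hσ (n + 1)).const_mul _),
        integral_const_mul, integral_const_mul]
      ring
    rw [e]
    refine integral_nonneg fun u => ?_
    have : (x * x) * |u| ^ n + (2 * x) * |u| ^ (n + 1) + |u| ^ (n + 2) =
      |u| ^ n * (x + |u|) ^ 2 := by ring
    show 0 ≤ (x * x) * |u| ^ n + (2 * x) * |u| ^ (n + 1) + |u| ^ (n + 2)
    rw [this]; positivity
  have := discrim_le_zero h
  unfold discrim at this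
  linarith

/-- **Carleman's theorem.** If `s` is a strictly positive real sequence such that
`∑_{n ≥ 1} s_{2n} ^ (-1/(2n)) = ∞`, then the Hamburger moment problem for `s` is
determinate: any two measures on `ℝ` having all moments finite and equal to `s` coincide. -/
theorem carleman_determinate (s : ℕ → ℝ) (hpos : IsStrictPosSeq s)
    (hdiv : ¬ Summable fun n : ℕ =>
      (s (2 * (n + 1))) ^ (-(1 : ℝ) / (2 * ((n : ℝ) + 1)))) :
    ∀ σ₁ σ₂ : Measure ℝ,
      (∀ k : ℕ, Integrable (fun u : ℝ => |u| ^ k) σ₁) →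
      (∀ k : ℕ, Integrable (fun u : ℝ => |u| ^ k) σ₂) →
      (∀ k : ℕ, ∫ u, u ^ k ∂σ₁ = s k) →
      (∀ k : ℕ, ∫ u, u ^ k ∂σ₂ = s k) →
      σ₁ = σ₂ := by
  intro σ₁ σ₂ h₁ h₂ m₁ m₂
  have hspos : ∀ n, 0 < s (2 * n) := by
    intro n
    have h := hpos n (fun i => if i = n then 1 else 0) ⟨n, le_rfl, by simp⟩
    simpa [← two_mul] using h
  have hσ : ∀ k : ℕ, Integrable (fun u : ℝ => |u| ^ k) (σ₁ + σ₂) :=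
    fun k => (h₁ k).add_measure (h₂ k)
  set M : ℕ → ℝ := fun n => ∫ u, |u| ^ n ∂(σ₁ + σ₂) with hMdef
  have hMadd : ∀ n, M n = ∫ u, |u| ^ n ∂σ₁ + ∫ u, |u| ^ n ∂σ₂ :=
    fun n => integral_add_measure (h₁ n) (h₂ n)
  have hMe : ∀ n, M (2 * n) = 2 * s (2 * n) := by
    intro n
    rw [hMadd, two_mul (s _)]
    congr 1
    · rw [← m₁]; congr 1; funext u; exact (even_two_mul n).pow_abs u
    · rw [← m₂]; congr 1; funext u; exact (even_two_mul n).pow_abs u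
  have hlog : ∀ n, M (n + 1) ^ 2 ≤ M n * M (n + 2) := carleman_logconvex hσ
  have hM0 : ∀ n, 0 ≤ M n := fun n => integral_nonneg fun u => by positivity
  have hM : ∀ n, 0 < M n := by
    intro n
    rcases Nat.even_or_odd' n with ⟨k, hk | hk⟩
    · rw [hk, hMe]; have := hspos k; linarith
    · refine lt_of_le_of_ne (hM0 n) fun h => ?_
      have h1 := hlog n
      have h2 : 0 < M (n + 1) := by
        rw [hk, show 2 * k + 1 + 1 = 2 * (k + 1) by ring, hMe]
        have := hspos (k + 1); linarith
      rw [← h, zero_mul] at h1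
      have := pow_pos h2 2
      linarith
  have hdivM : ¬ Summable fun n => M n / M (n + 1) := by
    intro hs
    apply hdiv
    have h1 := carleman_ineq _ (fun n => div_pos (hM n) (hM (n + 1))) hs
    have h2 := h1.comp_injective (i := fun n : ℕ => 2 * n + 1) (fun a b h => by
      simp only at h; omega)
    have hprod : ∀ n, ∏ j ∈ Finset.range n, M j / M (j + 1) = M 0 / M n := by
      intro n
      induction n with
      | zero => simp [(hM 0).ne']
      | succ n ih =>
        rw [Finset.prod_range_succ, ih]
        have := (hM n).ne'
        field_simp
    set c := min 1 (s 0) with hc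
    have hs0 : 0 < s 0 := hspos 0
    have hc0 : 0 < c := lt_min one_pos hs0
    refine Summable.of_nonneg_of_le (fun n => Real.rpow_nonneg (hspos (n + 1)).le _) (fun n => ?_)
      (h2.mul_left c⁻¹)
    simp only [Function.comp]
    rw [hprod, show 2 * n + 1 + 1 = 2 * (n + 1) by ring, hMe, show M 0 = 2 * s 0 from hMe 0,
      mul_div_mul_left _ _ (two_ne_zero), Real.div_rpow hs0.le (hspos _).le]
    have hp : (((2 * n + 1 : ℕ) : ℝ) + 1)⁻¹ = 1 / (2 * ((n : ℝ) + 1)) := by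
      rw [one_div]; congr 1; push_cast; ring
    rw [hp, neg_div, Real.rpow_neg (hspos _).le]
    set p : ℝ := 1 / (2 * ((n : ℝ) + 1)) with hpdef
    have hp0 : 0 ≤ p := by positivity
    have hp1 : p ≤ 1 := by
      rw [hpdef, div_le_one (by positivity)]
      have : (0 : ℝ) ≤ n := Nat.cast_nonneg n
      linarith
    have hcp : c ≤ s 0 ^ p := by
      calc c = c ^ (1 : ℝ) := (Real.rpow_one c).symm
        _ ≤ c ^ p := Real.rpow_le_rpow_of_exponent_ge hc0 (min_le_left _ _) hp1
        _ ≤ s 0 ^ p := Real.rpow_le_rpow hc0.le (min_le_right _ _) hp0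
    have hi : 0 ≤ (s (2 * (n + 1)) ^ p)⁻¹ := inv_nonneg.2 (Real.rpow_nonneg (hspos _).le _)
    calc (s (2 * (n + 1)) ^ p)⁻¹ = c⁻¹ * (c * (s (2 * (n + 1)) ^ p)⁻¹) := by field_simp
      _ ≤ c⁻¹ * (s 0 ^ p * (s (2 * (n + 1)) ^ p)⁻¹) := by gcongr
      _ = _ := by rw [div_eq_mul_inv]
  have hfin : ∀ σ : Measure ℝ, (∀ k : ℕ, Integrable (fun u : ℝ => |u| ^ k) σ) →
      IsFiniteMeasure σ := by
    intro σ h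
    have := h 0
    simp only [pow_zero] at this
    rcases integrable_const_iff.1 this with h | h
    · norm_num at h
    · exact h
  have := hfin σ₁ h₁
  have := hfin σ₂ h₂
  refine Measure.ext_of_charFun (funext fun t => ?_)
  have key := carleman_bang (fun n t => carlemanF σ₁ n t - carlemanF σ₂ n t) M hM hlog ?_ ?_ hdivM t
  · have h := sub_eq_zero.1 key
    rw [charFun_apply_real, charFun_apply_real]
    unfold carlemanF at h
    convert h using 4 with u u
    · push_cast; rw [pow_zero, one_mul]; congr 1; ring
    · push_cast; rw [pow_zero, one_mul]; congr 1; ring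
  · intro n
    have e : ∀ σ : Measure ℝ, (∀ k : ℕ, ∫ u, u ^ k ∂σ = s k) →
        carlemanF σ n 0 = Complex.I ^ n * (s n : ℂ) := by
      intro σ hm
      unfold carlemanF
      rw [← hm n, ← integral_complex_ofReal, ← integral_const_mul]
      congr 1; funext u
      simp [mul_pow]
    rw [e σ₁ m₁, e σ₂ m₂, sub_self]
  · intro n m t h
    have b1 := carlemanF_taylor h₁ n m t h
    have b2 := carlemanF_taylor h₂ n m t h
    have b3 := (norm_sub_le _ _).trans (add_le_add b1 b2)
    rw [← mul_add, ← hMadd] at b3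
    refine le_trans (le_of_eq ?_) b3
    congr 1
    simp only [mul_sub, Finset.sum_sub_distrib]
    ring
end
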